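/- In V̂⊗V̂⊗V̂ one has the identity −z⊗r + Σ_{i,j=1}^n m_ij x_i⊗r_j = −r⊗z + Σ_{i,j=1}^n m_ji r_i⊗x_j; that is, w = (z,x_1,…,x_n)Q(r,r_1,…,r_n)^t equals −r⊗z + (r_1,…,r_n)M^t(x_1,…,x_n)^t. -/

import Mathlib

/-!
Expanding both sides and using antisymmetry of `M`, the terms containing `z` cancel and the
identity reduces to `Σ m_ij (δ(x_i)⊗x_j + x_i⊗δ(x_j)) = 0` in `V̂ ⊗ V̂ ⊗ V̂`. By the Leibniz rule
the image of this sum in `T(V)` is `δ(r) = 0`. The identity in `T(V)` is transported to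
`V̂ ⊗ V̂ ⊗ V̂` by projecting `T(V)` onto its degree-three part (`deg3`); `deg3_left` and
`deg3_right` compute this projection on the two kinds of summands.
-/

/-!
STATEMENT 2: In V̂⊗V̂⊗V̂ one has
−z⊗r + Σ_{i,j} m_ij x_i⊗r_j = −r⊗z + Σ_{i,j} m_ji r_i⊗x_j,
i.e. w = (z,x_1,…,x_n)Q(r,r_1,…,r_n)ᵗ equals −r⊗z + (r_1,…,r_n)Mᵗ(x_1,…,x_n)ᵗ.
-/

open TensorProduct Matrix

noncomputable section

variable (k : Type) [Field k] (n : ℕ)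

/-- The standard basis of `V = k^n`. -/
def x (i : Fin n) : Fin n → k := Pi.single i 1

/-- `V̂ = V ⊕ k·z`. -/
abbrev Vhat (k : Type) [Field k] (n : ℕ) := (Fin n → k) × k

/-- The inclusion `V → V̂`. -/
def inc : (Fin n → k) →ₗ[k] Vhat k n := LinearMap.inl k (Fin n → k) k

/-- The extra degree-one generator `z ∈ V̂`. -/
def zv : Vhat k n := (0, 1)

/-- The basis vector `x_i` seen in `V̂`. -/
def xh (i : Fin n) : Vhat k n := inc k n (x k n i)

/-- The multiplication embedding `V ⊗ V → T(V)`. -/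
def embV : (Fin n → k) ⊗[k] (Fin n → k) →ₗ[k] TensorAlgebra k (Fin n → k) :=
  LinearMap.mul' k (TensorAlgebra k (Fin n → k)) ∘ₗ
    TensorProduct.map (TensorAlgebra.ι k) (TensorAlgebra.ι k)

variable (M : Matrix (Fin n) (Fin n) k)

/-- The relation `r = Σ m_ij x_i ⊗ x_j` as an element of `T(V)`. -/
def rTV : TensorAlgebra k (Fin n → k) :=
  ∑ i : Fin n, ∑ j : Fin n,
    M i j • (TensorAlgebra.ι k (x k n i) * TensorAlgebra.ι k (x k n j))

/-- `r` as an element of `V̂ ⊗ V̂`. -/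
def rT2 : Vhat k n ⊗[k] Vhat k n :=
  ∑ i : Fin n, ∑ j : Fin n, M i j • (xh k n i ⊗ₜ xh k n j)

variable (δ₀ : (Fin n → k) →ₗ[k] (Fin n → k) ⊗[k] (Fin n → k))

/-- `r_i = z⊗x_i − x_i⊗z − δ(x_i)` as an element of `V̂ ⊗ V̂`. -/
def r2 (i : Fin n) : Vhat k n ⊗[k] Vhat k n :=
  zv k n ⊗ₜ xh k n i - xh k n i ⊗ₜ zv k n
    - TensorProduct.map (inc k n) (inc k n) (δ₀ (x k n i))

/-- The candidate superpotential `w = −z⊗r + Σ_{i,j} m_ij x_i⊗r_j`. -/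
def w : Vhat k n ⊗[k] (Vhat k n ⊗[k] Vhat k n) :=
  -(zv k n ⊗ₜ rT2 k n M)
    + ∑ i : Fin n, ∑ j : Fin n, M i j • (xh k n i ⊗ₜ r2 k n δ₀ j)

/-- The trilinear map `(a, b, c) ↦ (a ⊗ b) ⊗ c` from `V` to `V̂ ⊗ V̂ ⊗ V̂`. -/
def trilin : MultilinearMap k (fun _ : Fin 3 => (Fin n → k))
    ((Vhat k n ⊗[k] Vhat k n) ⊗[k] Vhat k n) :=
  MultilinearMap.mk' (fun v => (inc k n (v 0) ⊗ₜ inc k n (v 1)) ⊗ₜ inc k n (v 2))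
    (by
      intro v i a b
      fin_cases i <;> simp [TensorProduct.tmul_add, TensorProduct.add_tmul])
    (by
      intro v i c a
      fin_cases i <;> simp [TensorProduct.smul_tmul'])

/-- The projection of `T(V)` onto its degree-three part, followed by the map
`V ⊗ V ⊗ V → V̂ ⊗ V̂ ⊗ V̂` induced by the inclusion. -/
def deg3 : TensorAlgebra k (Fin n → k) →ₗ[k] (Vhat k n ⊗[k] Vhat k n) ⊗[k] Vhat k n :=
  PiTensorProduct.lift (trilin k n)
    ∘ₗ DirectSum.component k ℕ (fun m => TensorPower k m (Fin n → k)) 3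
    ∘ₗ (TensorAlgebra.toDirectSum (R := k) (M := Fin n → k)).toLinearMap

/-- The degree-three projection recovers a pure tensor from the corresponding product in `T(V)`. -/
lemma deg3_mul (a b c : Fin n → k) :
    deg3 k n (TensorAlgebra.ι k a * TensorAlgebra.ι k b * TensorAlgebra.ι k c)
      = (inc k n a ⊗ₜ inc k n b) ⊗ₜ inc k n c := by
  have h : TensorAlgebra.ι k a * TensorAlgebra.ι k b * TensorAlgebra.ι k c
      = TensorAlgebra.tprod k (Fin n → k) 3 ![a, b, c] := by
    simp [TensorAlgebra.tprod_apply, mul_assoc]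
  rw [h]
  simp only [deg3, LinearMap.comp_apply, AlgHom.toLinearMap_apply,
    TensorAlgebra.toDirectSum_tensorPower_tprod]
  rw [← DirectSum.lof_eq_of k, DirectSum.component.lof_self]
  simp [trilin]

lemma deg3_left (t : (Fin n → k) ⊗[k] (Fin n → k)) (c : Fin n → k) :
    deg3 k n (embV k n t * TensorAlgebra.ι k c)
      = TensorProduct.map (inc k n) (inc k n) t ⊗ₜ inc k n c := by
  induction t with
  | zero => simp
  | tmul a b => simpa [embV] using deg3_mul k n a b c
  | add s t hs ht => simp [add_mul, hs, ht, TensorProduct.add_tmul]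

set_option synthInstance.maxHeartbeats 400000 in
lemma deg3_right (a : Fin n → k) (t : (Fin n → k) ⊗[k] (Fin n → k)) :
    deg3 k n (TensorAlgebra.ι k a * embV k n t)
      = (TensorProduct.assoc k (Vhat k n) (Vhat k n) (Vhat k n)).symm
          (inc k n a ⊗ₜ TensorProduct.map (inc k n) (inc k n) t) := by
  induction t with
  | zero => simp only [map_zero, mul_zero, TensorProduct.tmul_zero]
  | tmul b c => simpa [embV, mul_assoc] using deg3_mul k n a b c
  | add s t hs ht =>
    simp only [map_add, mul_add, hs, ht, TensorProduct.tmul_add]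

/-- The cancellation of the terms containing `z`, with the tensors replaced by arbitrary families:
`P`, `Q`, `R` stand for `z⊗x_i⊗x_j`, `x_i⊗z⊗x_j`, `x_i⊗x_j⊗z`, and `S`, `T` for `x_i⊗δ(x_j)`,
`δ(x_i)⊗x_j`. -/
lemma sum_cancel {A : Type*} [AddCommGroup A] [Module k A] (hanti : ∀ i j, M j i = -M i j)
    (P Q R S T : Fin n → Fin n → A)
    (key : ∑ i : Fin n, ∑ j : Fin n, M i j • (T i j + S i j) = 0) :
    -(∑ i : Fin n, ∑ j : Fin n, M i j • P i j)
        + ∑ i : Fin n, ∑ j : Fin n, M i j • (Q i j - R i j - S i j)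
      = -(∑ i : Fin n, ∑ j : Fin n, M i j • R i j)
        + ∑ i : Fin n, ∑ j : Fin n, M j i • (P i j - Q i j - T i j) := by
  rw [← sub_eq_zero, ← neg_eq_zero]
  refine Eq.trans ?_ key
  simp only [← Finset.sum_neg_distrib, ← Finset.sum_add_distrib, ← Finset.sum_sub_distrib]
  refine Finset.sum_congr rfl fun i _ => Finset.sum_congr rfl fun j _ => ?_
  rw [hanti i j]
  module

set_option synthInstance.maxHeartbeats 400000 in
theorem w_eq_r_tensor_z_form
    (hM : IsUnit M.det) (hMat : Mᵀ = -M)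
    (δ : TensorAlgebra k (Fin n → k) →ₗ[k] TensorAlgebra k (Fin n → k))
    (hLeib : ∀ a b, δ (a * b) = δ a * b + a * δ b)
    (hδι : ∀ v : Fin n → k, δ (TensorAlgebra.ι k v) = embV k n (δ₀ v))
    (hδr : δ (rTV k n M) = 0) :
    (TensorProduct.assoc k (Vhat k n) (Vhat k n) (Vhat k n)).symm (w k n M δ₀)
      = -(rT2 k n M ⊗ₜ zv k n)
        + ∑ i : Fin n, ∑ j : Fin n, M j i • (r2 k n δ₀ i ⊗ₜ xh k n j) := by
  have key : ∑ i : Fin n, ∑ j : Fin n, M i j •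
      (TensorProduct.map (inc k n) (inc k n) (δ₀ (x k n i)) ⊗ₜ[k] xh k n j
        + (TensorProduct.assoc k (Vhat k n) (Vhat k n) (Vhat k n)).symm
          (xh k n i ⊗ₜ TensorProduct.map (inc k n) (inc k n) (δ₀ (x k n j)))) = 0 := by
    have h := congrArg (deg3 k n) hδr
    simpa only [rTV, xh, map_sum, map_smul, hLeib, hδι, map_add, deg3_left, deg3_right,
      map_zero] using h
  have hanti : ∀ i j, M j i = -M i j := fun i j => by
    simpa using congrArg (fun N : Matrix (Fin n) (Fin n) k => N i j) hMat
  simp only [w, rT2, r2, LinearEquiv.map_add, map_neg, map_sub,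
    map_sum, LinearEquiv.map_smul, TensorProduct.tmul_sum, TensorProduct.sum_tmul,
    TensorProduct.tmul_smul, ← TensorProduct.smul_tmul', TensorProduct.tmul_sub,
    TensorProduct.sub_tmul, TensorProduct.assoc_symm_tmul]
  exact sum_cancel k n M hanti
    (fun i j => (zv k n ⊗ₜ[k] xh k n i) ⊗ₜ[k] xh k n j)
    (fun i j => (xh k n i ⊗ₜ[k] zv k n) ⊗ₜ[k] xh k n j)
    (fun i j => (xh k n i ⊗ₜ[k] xh k n j) ⊗ₜ[k] zv k n)
    (fun i j => (TensorProduct.assoc k (Vhat k n) (Vhat k n) (Vhat k n)).symm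
      (xh k n i ⊗ₜ[k] TensorProduct.map (inc k n) (inc k n) (δ₀ (x k n j))))
    (fun i j => TensorProduct.map (inc k n) (inc k n) (δ₀ (x k n i)) ⊗ₜ[k] xh k n j) key

end
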